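/- Let n ≥ 1, let A₀ ∈ ℝ^{n×n} be singular of rank n − 1, let F : ℝ^{n×n} → ℝ^{n×n} be bounded on a ball B(A₀, δ), and let k > n² be an integer. Then the integral over B(A₀, δ) (with respect to Lebesgue measure on ℝ^{n²}) of ‖A⁻¹ − F(A)‖^k dA diverges to +∞ (where the integrand is defined Lebesgue-almost everywhere since singular matrices form a null set). -/

import Mathlib

open MeasureTheory

attribute [local instance] Matrix.frobeniusNormedAddCommGroup

noncomputable instance (n : ℕ) : MeasureSpace (Matrix (Fin n) (Fin n) ℝ) :=
  inferInstanceAs (MeasureSpace (Fin n → Fin n → ℝ))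

lemma det_ne_zero_ae (n : ℕ) :
    ∀ᵐ A : Fin n → Fin n → ℝ, A ∈ {A : Fin n → Fin n → ℝ | (Matrix.of A).det ≠ 0} := by
  have hc : Continuous (fun A : Fin n → Fin n → ℝ => (Matrix.of A).det) := by
    simp only [Matrix.det_apply, Matrix.of_apply]
    fun_prop
  have hs : MeasurableSet {A : Fin n → Fin n → ℝ | (Matrix.of A).det ≠ 0} :=
    (isOpen_ne_fun hc continuous_const).measurableSet
  let L : ℝ →ₗ[ℝ] (Fin n → Fin n → ℝ) :=
    { toFun := fun x i j => if i = j then x else 0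
      map_add' := by intro x y; funext i j; by_cases h : i = j <;> simp [h]
      map_smul' := by intro x y; funext i j; by_cases h : i = j <;> simp [h] }
  refine ae_mem_of_ae_add_linearMap_mem L volume volume hs ?_
  intro y
  have hfin : {x : ℝ | ((- Matrix.of y).charpoly).IsRoot x}.Finite :=
    Polynomial.finite_setOfPred_isRoot (Matrix.charpoly_monic _).ne_zero
  have h0 := hfin.measure_zero volume
  rw [ae_iff]
  refine measure_mono_null ?_ h0
  intro x hx
  simp only [Set.mem_ofPred_eq, not_not] at hx ⊢
  rw [Polynomial.IsRoot, Matrix.eval_charpoly, ← hx]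
  congr 1
  ext i j
  by_cases h : i = j <;> simp [L, h, Matrix.scalar_apply, add_comm]

lemma key (n : ℕ) (g : (Fin n → Fin n → ℝ) → ENNReal) (A₀ : Fin n → Fin n → ℝ)
    (B : Set (Fin n → Fin n → ℝ)) (k : ℕ) (hk : n ^ 2 < k) (a : ℝ) (ha : 0 < a)
    (ε₀ : ℝ) (hε₀ : 0 < ε₀)
    (h : ∀ ε, 0 < ε → ε < ε₀ → Metric.ball A₀ ε ⊆ B ∧ ∀ A ∈ Metric.ball A₀ ε,
      (Matrix.of A).det ≠ 0 → ENNReal.ofReal ((a / ε) ^ k) ≤ g A) :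
    ∫⁻ A in B, g A = ⊤ := by
  set m := volume (Metric.ball (0 : Fin n → Fin n → ℝ) 1) with hm
  have hm0 : m ≠ 0 := (Metric.measure_ball_pos _ _ one_pos).ne'
  have hb : ∀ ε, 0 < ε → ε < ε₀ → ε < 1 → ENNReal.ofReal (a ^ k * ε⁻¹) * m ≤ ∫⁻ A in B, g A := by
    intro ε h0 h1 h2
    obtain ⟨hB, hg⟩ := h ε h0 h1
    refine le_trans ?_ (lintegral_mono_set hB)
    have h3 : ∫⁻ A in Metric.ball A₀ ε, ENNReal.ofReal ((a / ε) ^ k) ≤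
        ∫⁻ A in Metric.ball A₀ ε, g A := by
      refine lintegral_mono_ae ?_
      rw [ae_restrict_iff' Metric.isOpen_ball.measurableSet] 
      filter_upwards [det_ne_zero_ae n] with A hA hA'
      exact hg A hA' hA
    refine le_trans ?_ h3
    rw [setLIntegral_const, Measure.addHaar_ball_of_pos _ _ h0, ← mul_assoc,
      ← ENNReal.ofReal_mul (by positivity)]
    refine mul_le_mul_left (ENNReal.ofReal_le_ofReal ?_) _
    have : Module.finrank ℝ (Fin n → Fin n → ℝ) = n ^ 2 := by
      simp [Module.finrank_pi_fintype, sq]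
    rw [this, div_pow, div_mul_eq_mul_div, mul_div_assoc]
    gcongr
    rw [le_div_iff₀ (by positivity), inv_mul_le_iff₀ h0, ← pow_succ']
    exact pow_le_pow_of_le_one h0.le h2.le hk
  have ht : Filter.Tendsto (fun ε : ℝ => ENNReal.ofReal (a ^ k * ε⁻¹) * m)
      (nhdsWithin 0 (Set.Ioi 0)) (nhds ⊤) := by
    have h1 : Filter.Tendsto (fun ε : ℝ => ENNReal.ofReal (a ^ k * ε⁻¹))
      (nhdsWithin 0 (Set.Ioi 0)) (nhds ⊤) :=
      ENNReal.tendsto_ofReal_nhds_top.2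
        (tendsto_inv_nhdsGT_zero.const_mul_atTop (by positivity))
    have := ENNReal.Tendsto.mul_const (b := m) h1 (Or.inl (by simp))
    rwa [ENNReal.top_mul hm0] at this
  refine top_le_iff.1 (le_of_tendsto ht ?_)
  filter_upwards [self_mem_nhdsWithin, mem_nhdsWithin_of_mem_nhds (Iio_mem_nhds hε₀),
    mem_nhdsWithin_of_mem_nhds (Iio_mem_nhds one_pos)] with ε h0 h1 h2
  exact hb ε h0 h1 h2

lemma frob_le {n : ℕ} (M : Matrix (Fin n) (Fin n) ℝ) (ε : ℝ) (hε : 0 ≤ ε)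
    (h : ∀ i j, |M i j| ≤ ε) : ‖M‖ ≤ n * ε := by
  rw [Matrix.frobenius_norm_def, ← Real.sqrt_eq_rpow]
  apply Real.sqrt_le_iff.2 ⟨by positivity, ?_⟩
  calc ∑ i, ∑ j, ‖M i j‖ ^ (2:ℝ) ≤ ∑ i : Fin n, ∑ j : Fin n, ε ^ 2 := by
        gcongr with i _ j _
        rw [Real.rpow_two]
        exact pow_le_pow_left₀ (norm_nonneg _) (h i j) 2
    _ = (n * ε) ^ 2 := by simp; ring

lemma inv_bound {n : ℕ} (A₀ A : Matrix (Fin n) (Fin n) ℝ) (h0 : A₀.det = 0) (hA : A.det ≠ 0) :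
    1 ≤ ‖A⁻¹‖ * ‖A - A₀‖ := by
  obtain ⟨v, hv, hv0⟩ := Matrix.exists_mulVec_eq_zero_iff.2 h0
  let V : Matrix (Fin n) (Fin n) ℝ := Matrix.of fun i _ => v i
  have hV : V ≠ 0 := by
    intro h
    apply hv
    funext i
    exact congrFun (congrFun h i) i
  have hAV : A₀ * V = 0 := by
    ext i j
    exact congrFun hv0 i
  have e : V = A⁻¹ * ((A - A₀) * V) := by
    rw [sub_mul, hAV, sub_zero, ← mul_assoc, Matrix.nonsing_inv_mul _ (isUnit_iff_ne_zero.2 hA),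
      one_mul]
  have hp : 0 < ‖V‖ := norm_pos_iff.2 hV
  have h1 : ‖V‖ ≤ ‖A⁻¹‖ * (‖A - A₀‖ * ‖V‖) := by
    calc ‖V‖ = ‖A⁻¹ * ((A - A₀) * V)‖ := by rw [← e]
      _ ≤ ‖A⁻¹‖ * ‖(A - A₀) * V‖ := Matrix.frobenius_norm_mul _ _
      _ ≤ _ := by gcongr; exact Matrix.frobenius_norm_mul _ _
  rw [← mul_assoc] at h1
  exact le_of_mul_le_mul_right (by linarith) hp

theorem integral_error_diverges {n : ℕ} (hn : 1 ≤ n)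
    (A₀ : Matrix (Fin n) (Fin n) ℝ) (hdet : A₀.det = 0) (hrank : A₀.rank = n - 1)
    (δ : ℝ) (hδ : 0 < δ)
    (F : Matrix (Fin n) (Fin n) ℝ → Matrix (Fin n) (Fin n) ℝ)
    (C : ℝ) (hF : ∀ A ∈ Metric.ball A₀ δ, ‖F A‖ ≤ C)
    (k : ℕ) (hk : n ^ 2 < k) :
    ∫⁻ A in Metric.ball A₀ δ, ENNReal.ofReal (‖A⁻¹ - F A‖ ^ k) = ⊤ := by
  have hn' : (0 : ℝ) < n := by exact_mod_cast hn
  have hC : 0 ≤ C := (norm_nonneg _).trans (hF A₀ (Metric.mem_ball_self hδ))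
  have hfr : ∀ ε, 0 < ε → ∀ A : Matrix (Fin n) (Fin n) ℝ,
      (show Fin n → Fin n → ℝ from A) ∈
        Metric.ball (show Fin n → Fin n → ℝ from A₀) ε → ‖A - A₀‖ ≤ n * ε := by
    intro ε hε A hA
    refine frob_le _ ε hε.le fun i j => ?_
    have h1 := (dist_pi_lt_iff hε).1 (Metric.mem_ball.1 hA) i
    have h2 := (dist_pi_lt_iff hε).1 h1 j
    exact (Real.dist_eq _ _ ▸ h2).le
  refine key n (fun A => ENNReal.ofReal (‖(Matrix.of A)⁻¹ - F (Matrix.of A)‖ ^ k)) A₀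
    {A | Matrix.of A ∈ Metric.ball A₀ δ} k hk (1 / (2 * n)) (by positivity)
    (min (δ / n) (1 / (2 * n * (C + 1)))) (by positivity) ?_
  intro ε h0 h1
  have hε1 : n * ε < δ := by
    have := lt_of_lt_of_le h1 (min_le_left _ _)
    rw [lt_div_iff₀ hn'] at this; linarith
  have hε2 : C ≤ 1 / (2 * n) / ε := by
    have := lt_of_lt_of_le h1 (min_le_right _ _)
    rw [lt_div_iff₀ (by positivity)] at this
    rw [div_div, le_div_iff₀ (by positivity)]
    nlinarith [mul_pos hn' h0]
  have hsub : ∀ A : Matrix (Fin n) (Fin n) ℝ, (show Fin n → Fin n → ℝ from A) ∈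
        Metric.ball (show Fin n → Fin n → ℝ from A₀) ε → A ∈ Metric.ball A₀ δ := by
    intro A hA
    rw [mem_ball_iff_norm]
    exact (hfr ε h0 A hA).trans_lt hε1
  refine ⟨fun A hA => hsub A hA, fun A hA hd => ?_⟩
  apply ENNReal.ofReal_le_ofReal
  apply pow_le_pow_left₀ (by positivity)
  have hb := inv_bound A₀ (Matrix.of A) hdet hd
  have hf := hF _ (hsub (Matrix.of A) hA)
  have hr := hfr ε h0 (Matrix.of A) hA
  have h3 : 1 ≤ ‖(Matrix.of A)⁻¹‖ * (n * ε) := hb.trans (by gcongr)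
  have h4 : 1 / (n * ε) ≤ ‖(Matrix.of A)⁻¹‖ := by
    rwa [div_le_iff₀ (by positivity)]
  have h5 : 1 / (n * ε) = 1 / (2 * n) / ε + 1 / (2 * n) / ε := by field_simp; norm_num
  have h6 := norm_sub_norm_le (Matrix.of A)⁻¹ (F (Matrix.of A))
  linarith
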